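/- Burn-in to the fixed point (random walk lemma): let p* solve φ(p)=p with φ'(p*)<1, and let p̄ be the least solution of φ(p)=p greater than p* if one exists and 1 otherwise. For every μ > 0 there exist δ, c, α > 0 and N such that for all n ≥ N: for any initial graph X(0) on [n] with p* + μ ≤ r̄(X(0)) ≤ p̄ − μ, after T = ⌈c·n²⌉ steps of the Glauber dynamics, P( r̄(X(T)) ≤ r̄(X(0)) − δ ) ≥ 1 − e^{−αn}. -/

import Mathlib

open Finset

open scoped Classical

noncomputable section

/-- The set of edges of the complete graph `K_n` on vertex set `[n] = Fin n`:
unordered pairs of distinct vertices. -/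
abbrev EdgeK (n : ℕ) : Type := {e : Sym2 (Fin n) // ¬ e.IsDiag}

/-- A graph on `[n]`, identified with an element `X ∈ {0,1}^{E(K_n)}`. -/
abbrev Config (n : ℕ) : Type := EdgeK n → Bool

/-- The image of an edge under an injection of vertex sets. -/
def mapEdge {m n : ℕ} (v : Fin m ↪ Fin n) (a : EdgeK m) : EdgeK n :=
  ⟨a.1.map v, fun h => a.2 ((Sym2.isDiag_map v.injective).mp h)⟩

/-- The complete graph `K_n` as a configuration. -/
def fullConfig (n : ℕ) : Config n := fun _ => true

/-- `X ∪ {e}`. -/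
def addEdge {n : ℕ} (X : Config n) (e : EdgeK n) : Config n :=
  fun f => if f = e then true else X f

/-- `X_{e+}` (for `b = true`), resp. `X_{e-}` (for `b = false`). -/
def setEdge {n : ℕ} (X : Config n) (e : EdgeK n) (b : Bool) : Config n :=
  fun f => if f = e then b else X f

/-- `N_G(X)`: the number of tuples of `m` distinct vertices of `[n]` such that every
edge of the pattern graph `G` (a graph on `m` labelled vertices) is mapped to an edge of `X`. -/
def copyCount {n m : ℕ} (X : Config n) (G : Finset (EdgeK m)) : ℕ :=
  (univ.filter fun v : Fin m ↪ Fin n => ∀ a ∈ G, X (mapEdge v a) = true).card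

/-- `N_G(X, e)`: the number of such tuples for `X ∪ {e}` which moreover use the edge `e`. -/
def rootedCount {n m : ℕ} (X : Config n) (G : Finset (EdgeK m)) (e : EdgeK n) : ℕ :=
  (univ.filter fun v : Fin m ↪ Fin n =>
    (∃ a ∈ G, mapEdge v a = e) ∧ ∀ a ∈ G, addEdge X e (mapEdge v a) = true).card

/-- `N_G(X, e, e')`: the number of such tuples for `X ∪ {e, e'}` which use both `e` and `e'`. -/
def rooted2Count {n m : ℕ} (X : Config n) (G : Finset (EdgeK m)) (e e' : EdgeK n) : ℕ :=
  (univ.filter fun v : Fin m ↪ Fin n =>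
    (∃ a ∈ G, mapEdge v a = e) ∧ (∃ a ∈ G, mapEdge v a = e') ∧
      ∀ a ∈ G, addEdge (addEdge X e) e' (mapEdge v a) = true).card

/-- The number of edges of the graph `X`. -/
def edgeCount {n : ℕ} (X : Config n) : ℕ := (univ.filter fun e => X e = true).card

/-- Hamming distance between two graphs: the number of edges of disagreement. -/
def hamDist {n : ℕ} (X Y : Config n) : ℕ := (univ.filter fun f => X f ≠ Y f).card

/-- The Hamiltonian `H(X) = ∑ i, β i * N_{G_i}(X) / n^(|V_i| - 2)`. -/
def ergmH {s : ℕ} (V : Fin s → ℕ) (Pt : ∀ i, Finset (EdgeK (V i))) (β : Fin s → ℝ)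
    (n : ℕ) (X : Config n) : ℝ :=
  ∑ i, β i * (copyCount X (Pt i) : ℝ) / (n : ℝ) ^ (V i - 2)

/-- The Gibbs measure `p_n(X) = exp(H(X)) / Z_n`. -/
def gibbs {s : ℕ} (V : Fin s → ℕ) (Pt : ∀ i, Finset (EdgeK (V i))) (β : Fin s → ℝ)
    (n : ℕ) (X : Config n) : ℝ :=
  Real.exp (ergmH V Pt β n X) / ∑ Y : Config n, Real.exp (ergmH V Pt β n Y)

/-- `∂_e H(X) = H(X_{e+}) - H(X_{e-})`. -/
def dH {s : ℕ} (V : Fin s → ℕ) (Pt : ∀ i, Finset (EdgeK (V i))) (β : Fin s → ℝ)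
    (n : ℕ) (X : Config n) (e : EdgeK n) : ℝ :=
  ergmH V Pt β n (setEdge X e true) - ergmH V Pt β n (setEdge X e false)

/-- The transition kernel of the Glauber dynamics: a uniformly random edge `e` of `K_n` is
chosen and set present with probability `exp(∂_e H(X)) /(1 + exp(∂_e H(X)))`, absent
otherwise. -/
def glauber {s : ℕ} (V : Fin s → ℕ) (Pt : ∀ i, Finset (EdgeK (V i))) (β : Fin s → ℝ)
    (n : ℕ) (X Y : Config n) : ℝ :=
  ((n.choose 2 : ℝ))⁻¹ * ∑ e : EdgeK n,
    ((if Y = setEdge X e true then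
        Real.exp (dH V Pt β n X e) / (1 + Real.exp (dH V Pt β n X e)) else 0)
      + (if Y = setEdge X e false then 1 / (1 + Real.exp (dH V Pt β n X e)) else 0))

/-- The `t`-step distribution of the Markov chain with one-step kernel `K`,
started from a given state. -/
def kernelStep {n : ℕ} (K : Config n → Config n → ℝ) : ℕ → Config n → Config n → ℝ
  | 0 => fun x y => if y = x then 1 else 0
  | (t+1) => fun x y => ∑ z, kernelStep K t x z * K z y

/-- Total variation distance between two (signed) distributions on `Config n`. -/
def tvDist {n : ℕ} (μ ν : Config n → ℝ) : ℝ := (∑ Y, |μ Y - ν Y|) / 2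

/-- `mixes K π t` says that after `t` steps the chain with kernel `K` is within total
variation distance `e⁻¹` of `π` from every starting state. -/
def mixes {n : ℕ} (K : Config n → Config n → ℝ) (π : Config n → ℝ) (t : ℕ) : Prop :=
  ∀ x, tvDist (kernelStep K t x) π ≤ Real.exp (-1)

/-- The mixing time: the least `t` such that from every starting state the chain is within
total variation distance `e⁻¹` of `π`. -/
def mixingTime {n : ℕ} (K : Config n → Config n → ℝ) (π : Config n → ℝ) : ℕ :=
  sInf {t | mixes K π t}

/-- `Ψ(p) = ∑ i, 2 β_i |E_i| p^(|E_i| - 1)`. -/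
def PsiF {s : ℕ} {V : Fin s → ℕ} (Pt : ∀ i, Finset (EdgeK (V i))) (β : Fin s → ℝ)
    (p : ℝ) : ℝ :=
  ∑ i, 2 * β i * ((Pt i).card : ℝ) * p ^ ((Pt i).card - 1)

/-- `φ(p) = exp(Ψ(p)) / (1 + exp(Ψ(p)))`. -/
def phiF {s : ℕ} {V : Fin s → ℕ} (Pt : ∀ i, Finset (EdgeK (V i))) (β : Fin s → ℝ)
    (p : ℝ) : ℝ :=
  Real.exp (PsiF Pt β p) / (1 + Real.exp (PsiF Pt β p))

/-- High temperature phase: `φ(p) = p` has a unique solution `p*` (in `[0,1]`), which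
moreover satisfies `φ'(p*) < 1`. -/
def HighTemp {s : ℕ} {V : Fin s → ℕ} (Pt : ∀ i, Finset (EdgeK (V i))) (β : Fin s → ℝ)
    (pstar : ℝ) : Prop :=
  pstar ∈ Set.Icc (0:ℝ) 1 ∧ phiF Pt β pstar = pstar ∧
    (∀ q ∈ Set.Icc (0:ℝ) 1, phiF Pt β q = q → q = pstar) ∧
    deriv (phiF Pt β) pstar < 1

/-- Low temperature phase: `φ(p) = p` has at least two solutions `p` with `φ'(p) < 1`. -/
def LowTemp {s : ℕ} {V : Fin s → ℕ} (Pt : ∀ i, Finset (EdgeK (V i))) (β : Fin s → ℝ) : Prop :=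
  ∃ p₁ p₂ : ℝ, p₁ ∈ Set.Icc (0:ℝ) 1 ∧ p₂ ∈ Set.Icc (0:ℝ) 1 ∧ p₁ ≠ p₂ ∧
    phiF Pt β p₁ = p₁ ∧ phiF Pt β p₂ = p₂ ∧
    deriv (phiF Pt β) p₁ < 1 ∧ deriv (phiF Pt β) p₂ < 1

/-- `r_G(X, e) = (N_G(X,e) / (2 |E(G)| n^(|V(G)|-2)))^(1/(|E(G)|-1))`. -/
def rG {n m : ℕ} (X : Config n) (G : Finset (EdgeK m)) (e : EdgeK n) : ℝ :=
  ((rootedCount X G e : ℝ) / (2 * (G.card : ℝ) * (n : ℝ) ^ (m - 2))) ^ (((G.card : ℝ) - 1)⁻¹)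

/-- The set of values `r_G(X,e)` over all edges `e` of `K_n` and all graphs `G` on at
most `L` vertices with at least two edges. -/
def rSet (L n : ℕ) (X : Config n) : Set ℝ :=
  {r | ∃ m, m ≤ L ∧ ∃ G : Finset (EdgeK m), 2 ≤ G.card ∧ ∃ e : EdgeK n, r = rG X G e}

/-- `r̄(X)`: the maximum of `r_G(X,e)` over all edges `e` of `K_n` and all graphs `G` on
at most `L` vertices with at least two edges. -/
def rbar (L n : ℕ) (X : Config n) : ℝ := sSup (rSet L n X)

/-- `r_min(X)`: the corresponding minimum. -/
def rmin (L n : ℕ) (X : Config n) : ℝ := sInf (rSet L n X)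

/-- The cycle `C_l` on `l` labelled vertices, as a pattern graph. -/
def cyclePattern (l : ℕ) [NeZero l] : Finset (EdgeK l) :=
  univ.filter fun e => ∃ i : Fin l, e.1 = s(i, i + 1)

/-- The probability of a length-`T` trajectory `w` for the chain with kernel `K`
started at `x`. -/
def trajProb {n T : ℕ} (K : Config n → Config n → ℝ) (x : Config n)
    (w : Fin (T+1) → Config n) : ℝ :=
  (if w 0 = x then 1 else 0) * ∏ i : Fin T, K (w i.castSucc) (w i.succ)

/-- Two edges of `K_n` share a vertex. -/
def sharesVertex {n : ℕ} (e e' : EdgeK n) : Prop := ∃ v, v ∈ e.1 ∧ v ∈ e'.1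

end

/-!
While `r̄(X) ≤ R`, every edge is resampled as present with probability at most `φ(R)`. The
normalised rooted count of a pattern with `k` edges therefore contracts in mean, at rate
`(k - 1) / n.choose 2` per step, towards a value of at most `φ(R) R ^ (k - 2)`. With
`R = r̄(X(0)) + δ` this value is strictly below `(r̄(X(0)) - δ) ^ (k - 1)`: the graph of `φ` starts
out below the diagonal at `p*` because `φ'(p*) < 1`, and by the intermediate value theorem and
compactness it stays uniformly below it between `p* + μ` and `p̄ - μ / 2`. After `n ^ 2` steps the
counts have closed a definite fraction of the gap.

One step changes a normalised count by `O(1 / n)`, with second moment `O(n⁻³)`, so that the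
exponential moments of the chain killed on leaving `{r̄ ≤ R}` give deviation probabilities
`exp (- Ω(n))` over `n ^ 2` steps. A union bound over patterns, root edges and times shows that the
killed chain survives and ends below `r̄(X(0)) - δ`.
-/

open Matrix

/-! ### Killed Markov chains -/

section KilledChain

variable {S : Type*} [Fintype S] [DecidableEq S] {P : Matrix S S ℝ} {A B : Finset S}

/-- The sub-stochastic matrix of the Markov chain `P` killed when it leaves a state of `B`.
Its powers describe the chain up to and including its first visit to `B`. -/
def killedMatrix (P : Matrix S S ℝ) (B : Finset S) : Matrix S S ℝ :=
  Matrix.of fun x y => if x ∈ B then 0 else P x y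

lemma killedMatrix_nonneg (hP : P ∈ rowStochastic ℝ S) (x y : S) : 0 ≤ killedMatrix P B x y := by
  simp only [killedMatrix, of_apply]
  split_ifs
  exacts [le_rfl, nonneg_of_mem_rowStochastic hP]

lemma killedMatrix_pow_nonneg (hP : P ∈ rowStochastic ℝ S) (t : ℕ) (x y : S) :
    0 ≤ (killedMatrix P B ^ t) x y :=
  pow_apply_nonneg (killedMatrix_nonneg hP) t x y

lemma killedMatrix_pow_le_pow (hP : P ∈ rowStochastic ℝ S) (t : ℕ) (x y : S) :
    (killedMatrix P B ^ t) x y ≤ (P ^ t) x y := by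
  induction t generalizing y with
  | zero => simp
  | succ t ih =>
    simp only [pow_succ, mul_apply]
    refine sum_le_sum fun z _ => mul_le_mul (ih z) ?_ (killedMatrix_nonneg hP z y)
      (nonneg_of_mem_rowStochastic (pow_mem hP t))
    simp only [killedMatrix, of_apply]
    split_ifs
    exacts [nonneg_of_mem_rowStochastic hP, le_rfl]

lemma killedMatrix_mulVec (P : Matrix S S ℝ) (B : Finset S) (f : S → ℝ) (x : S) :
    (killedMatrix P B *ᵥ f) x = if x ∈ B then 0 else (P *ᵥ f) x := by
  split_ifs with hx <;> simp [killedMatrix, mulVec, dotProduct, hx]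

lemma sum_killedMatrix_pow_add_sum_killed (hP : P ∈ rowStochastic ℝ S) (x : S) (t : ℕ) :
    ∑ y, (killedMatrix P B ^ t) x y + ∑ i ∈ range t, ∑ y ∈ B, (killedMatrix P B ^ i) x y = 1 := by
  induction t with
  | zero => simp [one_apply]
  | succ t ih =>
    have row (z : S) : ∑ y, killedMatrix P B z y = if z ∈ B then 0 else 1 := by
      split_ifs with hz <;> simp [killedMatrix, hz, sum_row_of_mem_rowStochastic hP]
    have mass : ∑ y, (killedMatrix P B ^ (t + 1)) x y + ∑ y ∈ B, (killedMatrix P B ^ t) x y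
        = ∑ y, (killedMatrix P B ^ t) x y := by
      simp only [pow_succ, mul_apply]
      rw [sum_comm, ← sum_compl_add_sum B fun y => (killedMatrix P B ^ t) x y]
      simp only [← mul_sum, row, mul_ite, mul_zero, mul_one]
      rw [← sum_ite_mem_eq Bᶜ]
      simp
    rw [sum_range_succ, ← ih, ← mass]
    ring

theorem one_sub_le_sum_pow (hP : P ∈ rowStochastic ℝ S) {x : S} {t : ℕ} {b : ℝ}
    (hB : ∀ i < t, ∑ y ∈ B, (killedMatrix P B ^ i) x y ≤ b)
    (hA : ∑ y ∈ Aᶜ, (killedMatrix P B ^ t) x y ≤ b) :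
    1 - (t + 1) * b ≤ ∑ y ∈ A, (P ^ t) x y := by
  have killed : ∑ i ∈ range t, ∑ y ∈ B, (killedMatrix P B ^ i) x y ≤ t * b := by
    simpa using sum_le_card_nsmul _ _ b fun i hi => hB i (mem_range.mp hi)
  calc 1 - (t + 1) * b ≤ ∑ y ∈ A, (killedMatrix P B ^ t) x y := by
        linarith [sum_killedMatrix_pow_add_sum_killed (B := B) hP x t,
          sum_add_sum_compl A fun y => (killedMatrix P B ^ t) x y]
    _ ≤ ∑ y ∈ A, (P ^ t) x y := sum_le_sum fun y _ => killedMatrix_pow_le_pow hP t x y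

lemma mulVec_exp_le (hP : P ∈ rowStochastic ℝ S) {D : S → ℝ} {lam : ℝ} {x : S}
    (hD : ∀ y, P x y ≠ 0 → |lam * (D y - D x)| ≤ 1) :
    (P *ᵥ fun y => Real.exp (lam * D y)) x
      ≤ Real.exp (lam * (P *ᵥ D) x + lam ^ 2 * (P *ᵥ fun y => (D y - D x) ^ 2) x) := by
  have taylor (y : S) : P x y * Real.exp (lam * D y) ≤ P x y * (Real.exp (lam * D x)
      * (1 + lam * (D y - D x) + (lam * (D y - D x)) ^ 2)) := by
    by_cases h : P x y = 0
    · simp [h]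
    · refine mul_le_mul_of_nonneg_left ?_ (nonneg_of_mem_rowStochastic hP)
      rw [show lam * D y = lam * D x + lam * (D y - D x) by ring, Real.exp_add]
      gcongr
      linarith [(abs_le.mp (Real.abs_exp_sub_one_sub_id_le (hD y h))).2]
  have one : ∑ y, P x y = 1 := sum_row_of_mem_rowStochastic hP x
  simp only [mulVec, dotProduct]
  set m := ∑ y, P x y * D y
  set v := ∑ y, P x y * (D y - D x) ^ 2
  calc ∑ y, P x y * Real.exp (lam * D y)
      ≤ ∑ y, P x y * (Real.exp (lam * D x)
          * (1 + lam * (D y - D x) + (lam * (D y - D x)) ^ 2)) := sum_le_sum fun y _ => taylor y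
    _ = Real.exp (lam * D x) * ((1 - lam * D x) * ∑ y, P x y + lam * m + lam ^ 2 * v) := by
        simp only [m, v, mul_sum, ← sum_add_distrib]
        exact sum_congr rfl fun y _ => by ring
    _ = Real.exp (lam * D x) * (lam * (m - D x) + lam ^ 2 * v + 1) := by rw [one]; ring
    _ ≤ Real.exp (lam * D x) * Real.exp (lam * (m - D x) + lam ^ 2 * v) := by
        gcongr
        exact Real.add_one_le_exp _
    _ = Real.exp (lam * m + lam ^ 2 * v) := by rw [← Real.exp_add]; ring_nf

/-- Off the set `B`, the observable `D` contracts in mean by the factor `w` at each step of the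
chain `P`, with increments bounded by `b` of second moment at most `C`. -/
structure ContractsOff (P : Matrix S S ℝ) (B : Finset S) (D : S → ℝ) (w C b : ℝ) : Prop where
  mulVec_le : ∀ x ∉ B, (P *ᵥ D) x ≤ w * D x
  mulVec_sq_le : ∀ x ∉ B, (P *ᵥ fun y => (D y - D x) ^ 2) x ≤ C
  abs_sub_le : ∀ x ∉ B, ∀ y, P x y ≠ 0 → |D y - D x| ≤ b

namespace ContractsOff

variable {D : S → ℝ} {w C b : ℝ}

/- `exp (λ D)` evolves into at most `exp (λ² C) exp (λ w D)`, so that after `t` steps only the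
slope `λ w ^ t` is left and the errors `C λ² w ^ (2 i)` add up to at most `C λ² t`. -/
theorem killedMatrix_pow_mulVec_exp_le (h : ContractsOff P B D w C b) (hP : P ∈ rowStochastic ℝ S)
    (hw0 : 0 ≤ w) (hw1 : w ≤ 1) (hC : 0 ≤ C) {lam : ℝ} (hlam : 0 ≤ lam) (hb : lam * b ≤ 1)
    (t : ℕ) (x : S) :
    (killedMatrix P B ^ t *ᵥ fun y => Real.exp (lam * D y)) x
      ≤ Real.exp (lam * w ^ t * D x + C * lam ^ 2 * t) := by
  induction t generalizing lam with
  | zero => simp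
  | succ t ih =>
    have step (z : S) : (killedMatrix P B *ᵥ fun y => Real.exp (lam * D y)) z
        ≤ Real.exp (lam ^ 2 * C) * Real.exp (lam * w * D z) := by
      rw [killedMatrix_mulVec, ← Real.exp_add]
      split_ifs with hz
      · positivity
      refine (mulVec_exp_le hP fun y hy => ?_).trans (Real.exp_le_exp.mpr ?_)
      · rw [abs_mul, abs_of_nonneg hlam]
        exact (mul_le_mul_of_nonneg_left (h.abs_sub_le z hz y hy) hlam).trans hb
      · linarith [mul_le_mul_of_nonneg_left (h.mulVec_le z hz) hlam,
          mul_le_mul_of_nonneg_left (h.mulVec_sq_le z hz) (sq_nonneg lam)]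
    have hlamw : lam * w ≤ lam := mul_le_of_le_one_right hlam hw1
    have hbw : lam * w * b ≤ 1 := by
      rw [mul_right_comm]
      exact (mul_le_of_le_one_left hw0 hb).trans hw1
    calc (killedMatrix P B ^ (t + 1) *ᵥ fun y => Real.exp (lam * D y)) x
        = (killedMatrix P B ^ t *ᵥ (killedMatrix P B *ᵥ fun y => Real.exp (lam * D y))) x := by
          rw [mulVec_mulVec, pow_succ]
      _ ≤ (killedMatrix P B ^ t *ᵥ
            (Real.exp (lam ^ 2 * C) • fun z => Real.exp (lam * w * D z))) x :=
          dotProduct_le_dotProduct_of_nonneg_left step fun z => killedMatrix_pow_nonneg hP t x z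
      _ = Real.exp (lam ^ 2 * C)
            * (killedMatrix P B ^ t *ᵥ fun z => Real.exp (lam * w * D z)) x := by
          rw [mulVec_smul, Pi.smul_apply, smul_eq_mul]
      _ ≤ Real.exp (lam ^ 2 * C)
            * Real.exp (lam * w * w ^ t * D x + C * (lam * w) ^ 2 * t) := by
          gcongr
          exact ih (by positivity) hbw
      _ ≤ Real.exp (lam ^ 2 * C) * Real.exp (lam * w * w ^ t * D x + C * lam ^ 2 * t) := by gcongr
      _ = Real.exp (lam * w ^ (t + 1) * D x + C * lam ^ 2 * (t + 1 : ℕ)) := by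
          rw [← Real.exp_add]
          push_cast
          ring_nf

theorem sum_killedMatrix_pow_le_exp (h : ContractsOff P B D w C b) (hP : P ∈ rowStochastic ℝ S)
    (hw0 : 0 ≤ w) (hw1 : w ≤ 1) (hC : 0 ≤ C) {lam : ℝ} (hlam : 0 ≤ lam) (hb : lam * b ≤ 1)
    (t : ℕ) (x : S) (θ : ℝ) :
    ∑ y with θ < D y, (killedMatrix P B ^ t) x y
      ≤ Real.exp (lam * (w ^ t * D x - θ) + C * lam ^ 2 * t) := by
  have markov : ∑ y with θ < D y, (killedMatrix P B ^ t) x y * Real.exp (lam * θ)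
      ≤ (killedMatrix P B ^ t *ᵥ fun y => Real.exp (lam * D y)) x := by
    calc ∑ y with θ < D y, (killedMatrix P B ^ t) x y * Real.exp (lam * θ)
        ≤ ∑ y with θ < D y, (killedMatrix P B ^ t) x y * Real.exp (lam * D y) := by
          refine sum_le_sum fun y hy =>
            mul_le_mul_of_nonneg_left ?_ (killedMatrix_pow_nonneg hP t x y)
          exact Real.exp_le_exp.mpr (mul_le_mul_of_nonneg_left (mem_filter.mp hy).2.le hlam)
      _ ≤ ∑ y, (killedMatrix P B ^ t) x y * Real.exp (lam * D y) :=
          sum_le_sum_of_subset_of_nonneg (filter_subset _ _) fun y _ _ =>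
            mul_nonneg (killedMatrix_pow_nonneg hP t x y) (Real.exp_nonneg _)
  rw [← sum_mul] at markov
  calc ∑ y with θ < D y, (killedMatrix P B ^ t) x y
      ≤ (killedMatrix P B ^ t *ᵥ fun y => Real.exp (lam * D y)) x / Real.exp (lam * θ) :=
        (le_div_iff₀ (Real.exp_pos _)).mpr markov
    _ ≤ Real.exp (lam * w ^ t * D x + C * lam ^ 2 * t) / Real.exp (lam * θ) := by
        gcongr
        exact h.killedMatrix_pow_mulVec_exp_le hP hw0 hw1 hC hlam hb t x
    _ = Real.exp (lam * (w ^ t * D x - θ) + C * lam ^ 2 * t) := by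
        rw [← Real.exp_sub]
        ring_nf

end ContractsOff

end KilledChain

/-! ### Counting embeddings -/

lemma card_filter_embedding_mem_le {ι κ : Type*} [Fintype ι] [DecidableEq ι] [Fintype κ]
    [DecidableEq κ] (S : Finset ι) (A : ι → Finset κ) :
    #{v : ι ↪ κ | ∀ k ∈ S, v k ∈ A k}
      ≤ (∏ k ∈ S, #(A k)) * Fintype.card κ ^ (Fintype.card ι - #S) := by
  calc #{v : ι ↪ κ | ∀ k ∈ S, v k ∈ A k}
      ≤ #(Fintype.piFinset (S.piecewise A fun _ => univ)) := by
        refine card_le_card_of_injOn (fun v => ⇑v) (fun v hv => ?_) DFunLike.coe_injective.injOn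
        simp only [coe_filter, mem_univ, true_and, Set.mem_ofPred_eq] at hv
        simp only [mem_coe, Fintype.mem_piFinset]
        intro k
        by_cases hk : k ∈ S <;> simp [hk, hv]
    _ = (∏ k ∈ S, #(A k)) * Fintype.card κ ^ (Fintype.card ι - #S) := by
        rw [Fintype.card_piFinset, ← prod_mul_prod_compl S, ← card_compl, ← card_univ (α := κ),
          ← prod_const]
        congr 1 <;> refine prod_congr rfl fun k hk => ?_
        · simp [hk]
        · simp [mem_compl.mp hk]

lemma card_edgeK (n : ℕ) : Fintype.card (EdgeK n) = n.choose 2 := by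
  simpa using Sym2.card_subtype_not_diag (α := Fin n)

section Patterns

variable {m n : ℕ}

lemma EdgeK.exists_eq_mk (a : EdgeK m) : ∃ i j, i ≠ j ∧ a.1 = s(i, j) := by
  obtain ⟨⟨i, j⟩, ha⟩ := a
  exact ⟨i, j, by simpa using ha, rfl⟩

lemma EdgeK.exists_mem_notMem {a b : EdgeK m} (hab : a ≠ b) : ∃ k ∈ b.1, k ∉ a.1 := by
  obtain ⟨i, j, hij, hb⟩ := b.exists_eq_mk
  by_contra! h
  refine hab (Subtype.ext ?_)
  rw [hb]
  exact (Sym2.mem_and_mem_iff hij).mp ⟨h i (by simp [hb]), h j (by simp [hb])⟩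

lemma EdgeK.card_toFinset (a : EdgeK m) : #a.1.toFinset = 2 :=
  Sym2.card_toFinset_of_not_isDiag _ a.2

lemma mapEdge_injective (v : Fin m ↪ Fin n) : Function.Injective (mapEdge v) := fun _ _ h =>
  Subtype.ext (Sym2.map.injective v.injective (congrArg Subtype.val h))

lemma apply_mem_mapEdge (v : Fin m ↪ Fin n) {a : EdgeK m} {k : Fin m} (hk : k ∈ a.1) :
    v k ∈ (mapEdge v a).1 :=
  Sym2.mem_map.mpr ⟨k, hk, rfl⟩

lemma card_filter_mapEdge_eq_le (a : EdgeK m) (e : EdgeK n) :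
    #{v : Fin m ↪ Fin n | mapEdge v a = e} ≤ 2 * n ^ (m - 2) := by
  obtain ⟨i, j, hij, ha⟩ := a.exists_eq_mk
  obtain ⟨x, y, -, he⟩ := e.exists_eq_mk
  have ordered (x y : Fin n) : #{v : Fin m ↪ Fin n | v i = x ∧ v j = y} ≤ n ^ (m - 2) := by
    simpa [hij, hij.symm, card_pair] using
      card_filter_embedding_mem_le {i, j} fun k => if k = i then {x} else {y}
  calc #{v : Fin m ↪ Fin n | mapEdge v a = e}
      ≤ #(({v : Fin m ↪ Fin n | v i = x ∧ v j = y} : Finset _) ∪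
          ({v : Fin m ↪ Fin n | v i = y ∧ v j = x} : Finset _)) :=
        card_le_card fun v hv => by simpa [mapEdge, Subtype.ext_iff, ha, he] using hv
    _ ≤ 2 * n ^ (m - 2) := by
        rw [two_mul]
        exact (card_union_le _ _).trans (add_le_add (ordered x y) (ordered y x))

lemma card_filter_mapEdge_eq_and_eq_le {a b : EdgeK m} (hab : a ≠ b) (e f : EdgeK n) :
    #{v : Fin m ↪ Fin n | mapEdge v a = e ∧ mapEdge v b = f} ≤ 8 * n ^ (m - 3) := by
  obtain ⟨l, hlb, hla⟩ := EdgeK.exists_mem_notMem hab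
  set S := insert l a.1.toFinset
  set A : Fin m → Finset (Fin n) := fun k => if k = l then f.1.toFinset else e.1.toFinset
  have hS : #S = 3 := by
    rw [card_insert_of_notMem (by simpa using hla), EdgeK.card_toFinset]
  have hA (k : Fin m) : #(A k) = 2 := by
    dsimp only [A]
    split_ifs <;> exact EdgeK.card_toFinset _
  calc #{v : Fin m ↪ Fin n | mapEdge v a = e ∧ mapEdge v b = f}
      ≤ #{v : Fin m ↪ Fin n | ∀ k ∈ S, v k ∈ A k} := by
        refine card_le_card fun v => ?_
        simp only [mem_filter, mem_univ, true_and]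
        rintro ⟨rfl, rfl⟩ k hk
        by_cases hkl : k = l
        · simpa [A, hkl] using apply_mem_mapEdge v hlb
        · have hka : k ∈ a.1 := by simpa [S, hkl] using hk
          simpa [A, hkl] using apply_mem_mapEdge v hka
    _ ≤ 8 * n ^ (m - 3) := by
        convert card_filter_embedding_mem_le S A <;> simp [hA, hS]

/-- The image of a pattern graph under an injection of vertex sets. -/
def mapPattern (v : Fin m ↪ Fin n) (G : Finset (EdgeK m)) : Finset (EdgeK n) :=
  G.map ⟨mapEdge v, mapEdge_injective v⟩

lemma mem_mapPattern {v : Fin m ↪ Fin n} {G : Finset (EdgeK m)} {e : EdgeK n} :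
    e ∈ mapPattern v G ↔ ∃ a ∈ G, mapEdge v a = e := by
  simp [mapPattern]

/-- The placements of the pattern `G` in `[n]` that use the edge `e` of `K_n`. -/
noncomputable def rootedEmb (G : Finset (EdgeK m)) (e : EdgeK n) : Finset (Fin m ↪ Fin n) :=
  {v | e ∈ mapPattern v G}

lemma mem_rootedEmb {G : Finset (EdgeK m)} {e : EdgeK n} {v : Fin m ↪ Fin n} :
    v ∈ rootedEmb G e ↔ e ∈ mapPattern v G := by
  simp [rootedEmb]

lemma card_rootedEmb_le (G : Finset (EdgeK m)) (e : EdgeK n) :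
    #(rootedEmb G e) ≤ #G * (2 * n ^ (m - 2)) := by
  have cover : rootedEmb G e ⊆ G.biUnion fun a => {v | mapEdge v a = e} := fun v hv => by
    simpa [mem_rootedEmb, mem_mapPattern] using hv
  exact (card_le_card cover).trans
    (card_biUnion_le_card_mul _ _ _ fun a _ => card_filter_mapEdge_eq_le a e)

lemma card_rootedEmb_inter_le (G : Finset (EdgeK m)) {e f : EdgeK n} (hef : e ≠ f) :
    #(rootedEmb G e ∩ rootedEmb G f) ≤ #G ^ 2 * (8 * n ^ (m - 3)) := by
  have cover : rootedEmb G e ∩ rootedEmb G f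
      ⊆ (G ×ˢ G).biUnion fun p => {v | mapEdge v p.1 = e ∧ mapEdge v p.2 = f} := fun v hv => by
    obtain ⟨⟨a, ha, hae⟩, b, hb, hbf⟩ :
        (∃ a ∈ G, mapEdge v a = e) ∧ ∃ b ∈ G, mapEdge v b = f := by
      simpa [mem_rootedEmb, mem_mapPattern] using hv
    exact mem_biUnion.mpr ⟨(a, b), mk_mem_product ha hb, by simp [hae, hbf]⟩
  have each (p : EdgeK m × EdgeK m) :
      #{v : Fin m ↪ Fin n | mapEdge v p.1 = e ∧ mapEdge v p.2 = f} ≤ 8 * n ^ (m - 3) := by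
    by_cases hp : p.1 = p.2
    · rw [filter_false_of_mem (by rintro v - ⟨rfl, rfl⟩; exact hef (by rw [hp]))]
      simp
    · exact card_filter_mapEdge_eq_and_eq_le hp e f
  simpa [card_product, sq] using
    (card_le_card cover).trans (card_biUnion_le_card_mul _ _ _ fun p _ => each p)

lemma sum_card_rootedEmb_inter (G : Finset (EdgeK m)) (e : EdgeK n) :
    ∑ f, #(rootedEmb G e ∩ rootedEmb G f) = #G * #(rootedEmb G e) := by
  calc ∑ f, #(rootedEmb G e ∩ rootedEmb G f)
      = ∑ v ∈ rootedEmb G e, #(mapPattern v G) := by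
        convert (sum_card_bipartiteAbove_eq_sum_card_bipartiteBelow
          (s := rootedEmb G e) (t := univ) fun v f => f ∈ mapPattern v G).symm using 3 with f _ v
        · ext v
          simp [mem_rootedEmb, bipartiteBelow]
        · simp [bipartiteAbove]
    _ = #G * #(rootedEmb G e) := by
        simp [mapPattern, mul_comm]

lemma card_pattern_le_choose_two (G : Finset (EdgeK m)) : #G ≤ m.choose 2 :=
  card_edgeK m ▸ card_le_univ G

lemma three_le_of_two_le_card {G : Finset (EdgeK m)} (hG : 2 ≤ #G) : 3 ≤ m := by
  by_contra! hm
  have := hG.trans (card_pattern_le_choose_two G)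
  interval_cases m <;> simp at this

end Patterns

/-! ### Counts as sums of edge monomials -/

section EdgeMonomials

variable {m n : ℕ}

/-- The monomial `∏_{f ∈ T} X_f` in the edge variables of the graph `X`. -/
def edgeMonomial (T : Finset (EdgeK n)) (X : Config n) : ℝ := ∏ f ∈ T, if X f then 1 else 0

lemma edgeMonomial_nonneg (T : Finset (EdgeK n)) (X : Config n) : 0 ≤ edgeMonomial T X :=
  prod_nonneg fun f _ => by split_ifs <;> norm_num

lemma edgeMonomial_le_one (T : Finset (EdgeK n)) (X : Config n) : edgeMonomial T X ≤ 1 :=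
  prod_le_one (fun f _ => by split_ifs <;> norm_num) fun f _ => by split_ifs <;> norm_num

lemma edgeMonomial_setEdge (T : Finset (EdgeK n)) (X : Config n) (f : EdgeK n) (c : Bool) :
    edgeMonomial T (setEdge X f c)
      = if f ∈ T then if c then edgeMonomial (T.erase f) X else 0 else edgeMonomial T X := by
  have off (U : Finset (EdgeK n)) (hU : f ∉ U) :
      edgeMonomial U (setEdge X f c) = edgeMonomial U X :=
    prod_congr rfl fun g hg => by rw [setEdge, if_neg (ne_of_mem_of_not_mem hg hU)]
  split_ifs with hf hc
  · rw [← off _ (notMem_erase f T), edgeMonomial, ← mul_prod_erase T _ hf]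
    simp [setEdge, hc, edgeMonomial]
  · rw [edgeMonomial, ← mul_prod_erase T _ hf]
    simp [setEdge, hc]
  · exact off T hf

lemma abs_edgeMonomial_setEdge_sub_le (T : Finset (EdgeK n)) (X : Config n) (f : EdgeK n)
    (c : Bool) :
    |edgeMonomial T (setEdge X f c) - edgeMonomial T X| ≤ if f ∈ T then 1 else 0 := by
  split_ifs with hf
  · rw [abs_le]
    constructor <;>
      linarith [edgeMonomial_nonneg T X, edgeMonomial_le_one T X,
        edgeMonomial_nonneg T (setEdge X f c), edgeMonomial_le_one T (setEdge X f c)]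
  · simp [edgeMonomial_setEdge, hf]

lemma sum_edgeMonomial_setEdge_sub (T : Finset (EdgeK n)) (X : Config n) (p : EdgeK n → ℝ) :
    ∑ f, (p f * edgeMonomial T (setEdge X f true) + (1 - p f) * edgeMonomial T (setEdge X f false)
        - edgeMonomial T X)
      = ∑ f ∈ T, p f * edgeMonomial (T.erase f) X - #T * edgeMonomial T X := by
  calc _ = ∑ f, if f ∈ T then p f * edgeMonomial (T.erase f) X - edgeMonomial T X else 0 := by
        refine sum_congr rfl fun f _ => ?_
        by_cases hf : f ∈ T
        · simp [edgeMonomial_setEdge, hf]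
        · simp only [edgeMonomial_setEdge, hf, if_false]
          ring
    _ = ∑ f ∈ T, p f * edgeMonomial (T.erase f) X - #T * edgeMonomial T X := by
        simp [sum_ite_mem]

lemma copyCount_eq_sum (X : Config n) (G : Finset (EdgeK m)) :
    (copyCount X G : ℝ) = ∑ v : Fin m ↪ Fin n, edgeMonomial (mapPattern v G) X := by
  simp only [copyCount, edgeMonomial, mapPattern, prod_boole, sum_boole, forall_mem_map,
    Function.Embedding.coeFn_mk]

lemma rootedCount_eq_sum (X : Config n) (G : Finset (EdgeK m)) (e : EdgeK n) :
    (rootedCount X G e : ℝ)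
      = ∑ v ∈ rootedEmb G e, edgeMonomial ((mapPattern v G).erase e) X := by
  simp only [rootedCount, edgeMonomial, prod_boole, sum_boole, rootedEmb, filter_filter,
    mem_mapPattern, mem_erase, addEdge]
  congr 2
  ext v
  simp only [mem_filter, mem_univ, true_and]
  grind

lemma copyCount_setEdge_sub (X : Config n) (G : Finset (EdgeK m)) (e : EdgeK n) :
    (copyCount (setEdge X e true) G : ℝ) - copyCount (setEdge X e false) G
      = rootedCount X G e := by
  rw [copyCount_eq_sum, copyCount_eq_sum, rootedCount_eq_sum, ← sum_sub_distrib, rootedEmb,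
    sum_filter]
  refine sum_congr rfl fun v _ => ?_
  by_cases he : e ∈ mapPattern v G <;> simp [edgeMonomial_setEdge, he]

lemma abs_rootedCount_setEdge_sub_le (X : Config n) (G : Finset (EdgeK m)) (e f : EdgeK n)
    (c : Bool) :
    |(rootedCount (setEdge X f c) G e : ℝ) - rootedCount X G e|
      ≤ if f = e then 0 else (#(rootedEmb G e ∩ rootedEmb G f) : ℝ) := by
  rw [rootedCount_eq_sum, rootedCount_eq_sum, ← sum_sub_distrib]
  calc _ ≤ ∑ v ∈ rootedEmb G e, if f ∈ (mapPattern v G).erase e then (1 : ℝ) else 0 :=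
        (abs_sum_le_sum_abs _ _).trans
          (sum_le_sum fun v _ => abs_edgeMonomial_setEdge_sub_le _ X f c)
    _ = if f = e then 0 else (#(rootedEmb G e ∩ rootedEmb G f) : ℝ) := by
        split_ifs with hfe
        · simp [hfe]
        · rw [← filter_mem_eq_inter, ← sum_boole]
          simp [hfe, mem_rootedEmb]

lemma card_mapPattern_erase {G : Finset (EdgeK m)} {e : EdgeK n} {v : Fin m ↪ Fin n}
    (hv : v ∈ rootedEmb G e) : #((mapPattern v G).erase e) = #G - 1 := by
  rw [card_erase_of_mem (mem_rootedEmb.mp hv), mapPattern, card_map]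

lemma sum_rootedCount_erase (X : Config n) (G : Finset (EdgeK m)) (e : EdgeK n) :
    ∑ b ∈ G, (rootedCount X (G.erase b) e : ℝ)
      = ∑ v ∈ rootedEmb G e, ∑ f ∈ (mapPattern v G).erase e,
          edgeMonomial (((mapPattern v G).erase e).erase f) X := by
  have map_erase (v : Fin m ↪ Fin n) (b : EdgeK m) :
      mapPattern v (G.erase b) = (mapPattern v G).erase (mapEdge v b) :=
    Finset.map_erase _ _ _
  have roots {b : EdgeK m} : rootedEmb (G.erase b) e
      = (rootedEmb G e).filter fun v => mapEdge v b ≠ e := by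
    ext v
    simp [mem_rootedEmb, map_erase, and_comm, eq_comm]
  have remove (v : Fin m ↪ Fin n) (g : EdgeK n → ℝ) :
      ∑ f ∈ (mapPattern v G).erase e, g f
        = ∑ b ∈ G, if mapEdge v b ≠ e then g (mapEdge v b) else 0 := by
    rw [← filter_ne', sum_filter, mapPattern, sum_map]
    rfl
  simp only [rootedCount_eq_sum, roots, sum_filter, map_erase, remove]
  rw [sum_comm]
  simp only [erase_right_comm]

theorem sum_rootedCount_setEdge_sub_le (X : Config n) (G : Finset (EdgeK m)) (e : EdgeK n)
    {p : EdgeK n → ℝ} {q : ℝ} (hp : ∀ f, p f ≤ q) :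
    ∑ f, (p f * (rootedCount (setEdge X f true) G e : ℝ)
        + (1 - p f) * rootedCount (setEdge X f false) G e - rootedCount X G e)
      ≤ q * ∑ b ∈ G, (rootedCount X (G.erase b) e : ℝ) - (#G - 1 : ℕ) * rootedCount X G e := by
  rw [sum_rootedCount_erase]
  simp only [rootedCount_eq_sum, mul_sum, ← sum_add_distrib, ← sum_sub_distrib]
  rw [sum_comm]
  refine sum_le_sum fun v hv => ?_
  rw [sum_edgeMonomial_setEdge_sub, card_mapPattern_erase hv]
  gcongr with f _
  exacts [edgeMonomial_nonneg _ _, hp f]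

end EdgeMonomials

/-! ### Rooted densities -/

section Density

variable {L m n : ℕ} {X : Config n} {R : ℝ}

/-- The normalised rooted count `N_G(X, e) / (2 |E(G)| n ^ (|V(G)| - 2))`, so that `r_G(X, e)` is
its root of order `|E(G)| - 1`. It is `0` by division by zero when `G` has no edge. -/
noncomputable def rootedDensity (X : Config n) (G : Finset (EdgeK m)) (e : EdgeK n) : ℝ :=
  rootedCount X G e / (2 * #G * (n : ℝ) ^ (m - 2))

lemma rootedDensity_nonneg (X : Config n) (G : Finset (EdgeK m)) (e : EdgeK n) :
    0 ≤ rootedDensity X G e := by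
  unfold rootedDensity
  positivity

lemma rootedCount_le (X : Config n) (G : Finset (EdgeK m)) (e : EdgeK n) :
    (rootedCount X G e : ℝ) ≤ 2 * #G * (n : ℝ) ^ (m - 2) := by
  have count_le : rootedCount X G e ≤ #(rootedEmb G e) :=
    card_le_card fun v hv => mem_rootedEmb.mpr (mem_mapPattern.mpr (mem_filter.mp hv).2.1)
  calc (rootedCount X G e : ℝ) ≤ (#G * (2 * n ^ (m - 2)) : ℕ) :=
        mod_cast count_le.trans (card_rootedEmb_le G e)
    _ = 2 * #G * (n : ℝ) ^ (m - 2) := by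
        push_cast
        ring

lemma rootedCount_le_mul (X : Config n) (G : Finset (EdgeK m)) (e : EdgeK n) {x : ℝ}
    (h : rootedDensity X G e ≤ x) :
    (rootedCount X G e : ℝ) ≤ 2 * #G * (n : ℝ) ^ (m - 2) * x := by
  rcases (by positivity : 0 ≤ 2 * #G * (n : ℝ) ^ (m - 2)).eq_or_lt with h0 | h0
  · rw [← h0, zero_mul, h0]
    exact rootedCount_le X G e
  · rwa [rootedDensity, div_le_iff₀' h0] at h

lemma rootedDensity_le_one (X : Config n) (G : Finset (EdgeK m)) (e : EdgeK n) :
    rootedDensity X G e ≤ 1 :=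
  div_le_one_of_le₀ (rootedCount_le X G e) (by positivity)

lemma rG_le_iff {G : Finset (EdgeK m)} (hG : 2 ≤ #G) (hR : 0 ≤ R) {e : EdgeK n} :
    rG X G e ≤ R ↔ rootedDensity X G e ≤ R ^ (#G - 1) := by
  have cast : (#G : ℝ) - 1 = (#G - 1 : ℕ) := by
    rw [Nat.cast_pred (by lia)]
  rw [← Real.rpow_natCast, ← cast]
  exact Real.rpow_inv_le_iff_of_pos (rootedDensity_nonneg X G e) hR
    (by rw [cast]; exact mod_cast (by lia : 0 < #G - 1))

lemma rbar_nonneg : 0 ≤ rbar L n X := by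
  refine Real.sSup_nonneg ?_
  rintro _ ⟨m, -, G, -, e, rfl⟩
  exact Real.rpow_nonneg (rootedDensity_nonneg X G e) _

lemma bddAbove_rSet : BddAbove (rSet L n X) := by
  refine ⟨1, ?_⟩
  rintro _ ⟨m, -, G, hG, e, rfl⟩
  simpa [rG_le_iff hG] using rootedDensity_le_one X G e

lemma rbar_le_iff (hR : 0 ≤ R) :
    rbar L n X ≤ R ↔ ∀ m ≤ L, ∀ G : Finset (EdgeK m), 2 ≤ #G → ∀ e : EdgeK n,
      rootedDensity X G e ≤ R ^ (#G - 1) := by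
  constructor
  · intro h m hm G hG e
    exact (rG_le_iff hG hR).mp ((le_csSup bddAbove_rSet ⟨m, hm, G, hG, e, rfl⟩).trans h)
  · rintro h
    refine Real.sSup_le ?_ hR
    rintro _ ⟨m, hm, G, hG, e, rfl⟩
    exact (rG_le_iff hG hR).mpr (h m hm G hG e)

lemma rootedDensity_le_pow (h : rbar L n X ≤ R) (hm : m ≤ L) (G : Finset (EdgeK m))
    (e : EdgeK n) : rootedDensity X G e ≤ R ^ (#G - 1) := by
  rcases le_or_gt 2 #G with hG | hG
  · exact (rbar_le_iff (rbar_nonneg.trans h)).mp h m hm G hG e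
  · simpa [Nat.le_of_lt_succ hG] using rootedDensity_le_one X G e

theorem sum_rootedDensity_setEdge_sub_le (h : rbar L n X ≤ R) (hm : m ≤ L)
    {G : Finset (EdgeK m)} (hG : G.Nonempty) (e : EdgeK n) {p : EdgeK n → ℝ} {q : ℝ} (hq : 0 ≤ q)
    (hp : ∀ f, p f ≤ q) :
    ∑ f, (p f * rootedDensity (setEdge X f true) G e
        + (1 - p f) * rootedDensity (setEdge X f false) G e - rootedDensity X G e)
      ≤ (#G - 1 : ℕ) * (q * R ^ (#G - 2) - rootedDensity X G e) := by
  obtain ⟨i, -⟩ := e.exists_eq_mk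
  have hn : 0 < (n : ℝ) := mod_cast i.pos
  have erase_le : ∀ b ∈ G, (rootedCount X (G.erase b) e : ℝ)
      ≤ 2 * (#G - 1 : ℕ) * (n : ℝ) ^ (m - 2) * R ^ (#G - 2) := fun b hb => by
    simpa [card_erase_of_mem hb, Nat.sub_sub] using
      rootedCount_le_mul X _ e (rootedDensity_le_pow h hm (G.erase b) e)
  simp only [rootedDensity, mul_div_assoc', ← add_div, ← sub_div, ← sum_div]
  rw [div_le_iff₀ (by positivity)]
  calc _ ≤ q * ∑ b ∈ G, (rootedCount X (G.erase b) e : ℝ) - (#G - 1 : ℕ) * rootedCount X G e :=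
        sum_rootedCount_setEdge_sub_le X G e hp
    _ ≤ q * (#G * (2 * (#G - 1 : ℕ) * (n : ℝ) ^ (m - 2) * R ^ (#G - 2)))
          - (#G - 1 : ℕ) * rootedCount X G e := by
        gcongr
        simpa using sum_le_sum erase_le
    _ = _ := by
        field_simp

/-- A bound on the change of the density of `G` at `e` when the edge `f` is resampled: the number
of placements of `G` that use both edges, normalised in the same way. -/
noncomputable def influence (G : Finset (EdgeK m)) (e f : EdgeK n) : ℝ :=
  (if f = e then 0 else (#(rootedEmb G e ∩ rootedEmb G f) : ℝ)) / (2 * #G * (n : ℝ) ^ (m - 2))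

lemma influence_nonneg (G : Finset (EdgeK m)) (e f : EdgeK n) : 0 ≤ influence G e f := by
  unfold influence
  split_ifs <;> positivity

lemma abs_rootedDensity_setEdge_sub_le (X : Config n) (G : Finset (EdgeK m)) (e f : EdgeK n)
    (c : Bool) :
    |rootedDensity (setEdge X f c) G e - rootedDensity X G e| ≤ influence G e f := by
  have hD : 0 ≤ 2 * #G * (n : ℝ) ^ (m - 2) := by positivity
  rw [rootedDensity, rootedDensity, ← sub_div, abs_div, abs_of_nonneg hD]
  exact div_le_div_of_nonneg_right (abs_rootedCount_setEdge_sub_le X G e f c) hD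

lemma influence_le {G : Finset (EdgeK m)} (hG : 2 ≤ #G) (e f : EdgeK n) :
    influence G e f ≤ 4 * #G / n := by
  rw [influence]
  split_ifs with hfe
  · rw [zero_div]
    positivity
  obtain ⟨i, -⟩ := e.exists_eq_mk
  have hn : 0 < (n : ℝ) := mod_cast i.pos
  have hk : 0 < (#G : ℝ) := mod_cast two_pos.trans_le hG
  obtain ⟨j, rfl⟩ := Nat.exists_eq_add_of_le' (three_le_of_two_le_card hG)
  have inter : (#(rootedEmb G e ∩ rootedEmb G f) : ℝ) ≤ #G ^ 2 * (8 * n ^ j) :=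
    mod_cast card_rootedEmb_inter_le G (Ne.symm hfe)
  rw [div_le_div_iff₀ (by positivity) hn]
  calc _ ≤ (#G : ℝ) ^ 2 * (8 * n ^ j) * n := by gcongr
    _ = 4 * #G * (2 * #G * (n : ℝ) ^ (j + 1)) := by ring

lemma sum_influence_le (G : Finset (EdgeK m)) (e : EdgeK n) : ∑ f, influence G e f ≤ #G := by
  simp only [influence, ← sum_div]
  refine div_le_of_le_mul₀ (by positivity) (by positivity) ?_
  calc ∑ f, (if f = e then 0 else (#(rootedEmb G e ∩ rootedEmb G f) : ℝ))
      ≤ ∑ f, (#(rootedEmb G e ∩ rootedEmb G f) : ℝ) :=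
        sum_le_sum fun f _ => by split_ifs <;> simp
    _ = #G * #(rootedEmb G e) := mod_cast sum_card_rootedEmb_inter G e
    _ ≤ #G * (#G * (2 * n ^ (m - 2)) : ℕ) := by
        gcongr
        exact card_rootedEmb_le G e
    _ = #G * (2 * #G * (n : ℝ) ^ (m - 2)) := by
        push_cast
        ring

lemma sum_influence_sq_le {G : Finset (EdgeK m)} (hG : 2 ≤ #G) (e : EdgeK n) :
    ∑ f, influence G e f ^ 2 ≤ 4 * (#G : ℝ) ^ 2 / n := by
  calc ∑ f, influence G e f ^ 2 ≤ ∑ f, 4 * #G / n * influence G e f := by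
        refine sum_le_sum fun f _ => ?_
        rw [sq]
        exact mul_le_mul_of_nonneg_right (influence_le hG e f) (influence_nonneg G e f)
    _ ≤ 4 * #G / n * #G := by
        rw [← mul_sum]
        gcongr
        exact sum_influence_le G e
    _ = 4 * (#G : ℝ) ^ 2 / n := by ring

end Density

/-! ### The Glauber dynamics -/

section Glauber

variable {s L m n : ℕ} {V : Fin s → ℕ} {Pt : ∀ i, Finset (EdgeK (V i))} {β : Fin s → ℝ}

lemma exp_div_one_add_exp_eq_sigmoid (x : ℝ) : Real.exp x / (1 + Real.exp x) = Real.sigmoid x := by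
  rw [Real.sigmoid_def, Real.exp_neg]
  field_simp
  ring

lemma one_div_one_add_exp_eq_one_sub_sigmoid (x : ℝ) :
    1 / (1 + Real.exp x) = 1 - Real.sigmoid x := by
  rw [← exp_div_one_add_exp_eq_sigmoid]
  field_simp
  ring

lemma phiF_eq_sigmoid (Pt : ∀ i, Finset (EdgeK (V i))) (β : Fin s → ℝ) (p : ℝ) :
    phiF Pt β p = Real.sigmoid (PsiF Pt β p) :=
  exp_div_one_add_exp_eq_sigmoid _

lemma phiF_nonneg (Pt : ∀ i, Finset (EdgeK (V i))) (β : Fin s → ℝ) (p : ℝ) : 0 ≤ phiF Pt β p := by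
  rw [phiF_eq_sigmoid]
  exact Real.sigmoid_nonneg _

lemma differentiable_phiF (Pt : ∀ i, Finset (EdgeK (V i))) (β : Fin s → ℝ) :
    Differentiable ℝ (phiF Pt β) := by
  have hPsi : Differentiable ℝ (PsiF Pt β) := by
    unfold PsiF
    fun_prop
  rw [funext (phiF_eq_sigmoid Pt β)]
  exact hPsi.sigmoid

/-- Only the pattern consisting of a single edge may carry a negative parameter. -/
def IsFerromagnetic (Pt : ∀ i, Finset (EdgeK (V i))) (β : Fin s → ℝ) : Prop :=
  ∀ i, (V i = 2 ∧ #(Pt i) = 1) ∨ 0 ≤ β i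

lemma isFerromagnetic_of_pos (hs : 0 < s) (hV : V ⟨0, hs⟩ = 2) (hPt : #(Pt ⟨0, hs⟩) = 1)
    (hβ : ∀ i : Fin s, 0 < (i : ℕ) → 0 < β i) : IsFerromagnetic Pt β := by
  intro i
  rcases Nat.eq_zero_or_pos i with hi | hi
  · obtain rfl : i = ⟨0, hs⟩ := Fin.ext hi
    exact .inl ⟨hV, hPt⟩
  · exact .inr (hβ i hi).le

lemma rootedCount_eq_two (hm : m = 2) (X : Config n) {G : Finset (EdgeK m)} (hG : #G = 1)
    (e : EdgeK n) : rootedCount X G e = 2 := by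
  subst hm
  obtain ⟨a, rfl⟩ := card_eq_one.mp hG
  obtain ⟨x, y, hxy, he⟩ := e.exists_eq_mk
  have map_edge (v : Fin 2 ↪ Fin n) : (mapEdge v a).1 = s(v 0, v 1) := by
    obtain ⟨i, j, hij, ha⟩ := a.exists_eq_mk
    fin_cases i <;> fin_cases j <;> simp_all [mapEdge, Sym2.eq_swap]
  have map_eq {u w : Fin n} (huw : u ≠ w) (h : s(u, w) = e.1) :
      mapEdge (Function.Embedding.embFinTwo huw) a = e :=
    Subtype.ext ((map_edge _).trans h)
  refine le_antisymm (by exact_mod_cast (by simpa using rootedCount_le X {a} e)) ?_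
  have swap_ne : Function.Embedding.embFinTwo hxy.symm ≠ Function.Embedding.embFinTwo hxy :=
    fun h => hxy.symm (DFunLike.congr_fun h 0)
  refine (card_pair swap_ne).ge.trans (card_le_card ?_)
  simp [insert_subset_iff, addEdge, map_eq hxy he.symm,
    map_eq hxy.symm (Sym2.eq_swap.trans he.symm)]

lemma dH_eq_sum (V : Fin s → ℕ) (Pt : ∀ i, Finset (EdgeK (V i))) (β : Fin s → ℝ)
    (X : Config n) (e : EdgeK n) :
    dH V Pt β n X e = ∑ i, β i * rootedCount X (Pt i) e / (n : ℝ) ^ (V i - 2) := by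
  simp only [dH, ergmH, ← sum_sub_distrib, ← sub_div, ← mul_sub, copyCount_setEdge_sub]

theorem dH_le_PsiF (hβ : IsFerromagnetic Pt β) (hV : ∀ i, V i ≤ L) {X : Config n} {R : ℝ}
    (hX : rbar L n X ≤ R) (e : EdgeK n) : dH V Pt β n X e ≤ PsiF Pt β R := by
  obtain ⟨i, -⟩ := e.exists_eq_mk
  have hn : 0 < (n : ℝ) := mod_cast i.pos
  rw [dH_eq_sum, PsiF]
  refine sum_le_sum fun i _ => ?_
  rcases hβ i with ⟨hVi, hPt⟩ | hβi
  · simp [rootedCount_eq_two hVi X hPt, hVi, hPt, mul_comm]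
  · rw [div_le_iff₀ (by positivity)]
    calc β i * rootedCount X (Pt i) e
        ≤ β i * (2 * #(Pt i) * (n : ℝ) ^ (V i - 2) * R ^ (#(Pt i) - 1)) := by
          gcongr
          exact rootedCount_le_mul X _ e (rootedDensity_le_pow hX (hV i) (Pt i) e)
      _ = 2 * β i * #(Pt i) * R ^ (#(Pt i) - 1) * (n : ℝ) ^ (V i - 2) := by ring

/-- The transition matrix of the Glauber dynamics. -/
noncomputable def glauberMatrix (V : Fin s → ℕ) (Pt : ∀ i, Finset (EdgeK (V i))) (β : Fin s → ℝ)
    (n : ℕ) : Matrix (Config n) (Config n) ℝ :=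
  of (glauber V Pt β n)

lemma kernelStep_eq_pow (K : Config n → Config n → ℝ) (t : ℕ) (X Y : Config n) :
    kernelStep K t X Y = (of K ^ t) X Y := by
  induction t generalizing Y with
  | zero => simp [kernelStep, one_apply, eq_comm]
  | succ t ih => simp [kernelStep, pow_succ, mul_apply, ih]

lemma glauberMatrix_mulVec (V : Fin s → ℕ) (Pt : ∀ i, Finset (EdgeK (V i))) (β : Fin s → ℝ)
    (g : Config n → ℝ) (X : Config n) :
    (glauberMatrix V Pt β n *ᵥ g) X = (n.choose 2 : ℝ)⁻¹ * ∑ e,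
      (Real.sigmoid (dH V Pt β n X e) * g (setEdge X e true)
        + (1 - Real.sigmoid (dH V Pt β n X e)) * g (setEdge X e false)) := by
  simp only [glauberMatrix, mulVec, dotProduct, of_apply, glauber, exp_div_one_add_exp_eq_sigmoid,
    one_div_one_add_exp_eq_one_sub_sigmoid, mul_assoc, ← mul_sum, sum_mul]
  rw [sum_comm]
  simp [add_mul, sum_add_distrib]

lemma glauberMatrix_mem_rowStochastic (V : Fin s → ℕ) (Pt : ∀ i, Finset (EdgeK (V i)))
    (β : Fin s → ℝ) (hn : 2 ≤ n) : glauberMatrix V Pt β n ∈ rowStochastic ℝ (Config n) := by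
  refine ⟨fun X Y => ?_, funext fun X => ?_⟩
  · refine mul_nonneg (by positivity) (sum_nonneg fun e _ => add_nonneg ?_ ?_) <;>
      split_ifs <;> positivity
  · have hM : (n.choose 2 : ℝ) ≠ 0 := mod_cast (Nat.choose_pos hn).ne'
    simp [glauberMatrix_mulVec, -Fintype.card_subtype_compl, card_edgeK, hM]

lemma exists_eq_setEdge_of_glauberMatrix_ne_zero {X Y : Config n}
    (h : glauberMatrix V Pt β n X Y ≠ 0) : ∃ f c, Y = setEdge X f c := by
  contrapose! h
  simp [glauberMatrix, glauber, h]

lemma sq_div_four_le_choose_two (hn : 2 ≤ n) : (n : ℝ) ^ 2 / 4 ≤ n.choose 2 := by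
  have : (2 : ℝ) ≤ n := mod_cast hn
  rw [Nat.cast_choose_two]
  nlinarith

/-- The factor by which one Glauber step contracts, in mean, the density of a pattern with `k`
edges: each of the other `k - 1` edges is resampled with probability `1 / n.choose 2`. -/
noncomputable def contractionRate (n k : ℕ) : ℝ := 1 - (k - 1 : ℕ) / (n.choose 2 : ℝ)

lemma contractionRate_le_one (n k : ℕ) : contractionRate n k ≤ 1 :=
  sub_le_self _ (by positivity)

lemma contractionRate_nonneg {k : ℕ} (h : k ≤ n.choose 2) : 0 ≤ contractionRate n k :=
  sub_nonneg.mpr (div_le_one_of_le₀ (mod_cast (Nat.sub_le k 1).trans h) (by positivity))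

lemma contractionRate_pow_sq_le_half (hn : 2 ≤ n) {k : ℕ} (hk : 2 ≤ k) (h : k ≤ n.choose 2) :
    contractionRate n k ^ n ^ 2 ≤ 1 / 2 := by
  have hM : 0 < (n.choose 2 : ℝ) := mod_cast Nat.choose_pos hn
  have hMn : (n.choose 2 : ℝ) ≤ n ^ 2 := by
    rw [Nat.cast_choose_two]
    nlinarith [(Nat.cast_nonneg n : (0 : ℝ) ≤ n)]
  have hk1 : (1 : ℝ) ≤ (k - 1 : ℕ) := mod_cast Nat.le_sub_one_of_lt hk
  have one_le : 1 ≤ (k - 1 : ℕ) / (n.choose 2 : ℝ) * (n : ℝ) ^ 2 := by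
    rw [div_mul_eq_mul_div, one_le_div hM]
    nlinarith
  calc contractionRate n k ^ n ^ 2
      ≤ Real.exp (-((k - 1 : ℕ) / (n.choose 2 : ℝ))) ^ n ^ 2 :=
        pow_le_pow_left₀ (contractionRate_nonneg h) (Real.one_sub_le_exp_neg _) _
    _ = Real.exp (-((k - 1 : ℕ) / (n.choose 2 : ℝ) * (n : ℝ) ^ 2)) := by
        rw [← Real.exp_nat_mul]
        push_cast
        ring_nf
    _ ≤ Real.exp (-1) := by gcongr
    _ ≤ 1 / 2 := by linarith [Real.exp_neg_one_lt_d9]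

lemma glauberMatrix_mulVec_rootedDensity_sub_le (hβ : IsFerromagnetic Pt β) (hV : ∀ i, V i ≤ L)
    (hn : 2 ≤ n) (hm : m ≤ L) {G : Finset (EdgeK m)} (hG : G.Nonempty) (e : EdgeK n)
    {X : Config n} {R : ℝ} (hX : rbar L n X ≤ R) :
    (glauberMatrix V Pt β n *ᵥ fun Y => rootedDensity Y G e - phiF Pt β R * R ^ (#G - 2)) X
      ≤ contractionRate n #G * (rootedDensity X G e - phiF Pt β R * R ^ (#G - 2)) := by
  have hM : 0 < (n.choose 2 : ℝ) := mod_cast Nat.choose_pos hn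
  set a := phiF Pt β R * R ^ (#G - 2)
  set p := fun f => Real.sigmoid (dH V Pt β n X f)
  have hp (f : EdgeK n) : p f ≤ phiF Pt β R := by
    rw [phiF_eq_sigmoid]
    exact Real.sigmoid_le (dH_le_PsiF hβ hV hX f)
  have drift := sum_rootedDensity_setEdge_sub_le hX hm hG e (phiF_nonneg Pt β R) hp
  rw [glauberMatrix_mulVec]
  calc _ = (n.choose 2 : ℝ)⁻¹ * (∑ f, (p f * rootedDensity (setEdge X f true) G e
          + (1 - p f) * rootedDensity (setEdge X f false) G e - rootedDensity X G e)
          + n.choose 2 * (rootedDensity X G e - a)) := by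
        rw [← card_edgeK, ← nsmul_eq_mul (Fintype.card _), ← card_univ, ← sum_const,
          ← sum_add_distrib]
        congr 1
        exact sum_congr rfl fun f _ => by ring
    _ ≤ (n.choose 2 : ℝ)⁻¹ * ((#G - 1 : ℕ) * (a - rootedDensity X G e)
          + n.choose 2 * (rootedDensity X G e - a)) := by gcongr
    _ = _ := by
        rw [contractionRate]
        field_simp
        ring

lemma glauberMatrix_mulVec_sq_rootedDensity_sub_le (hn : 2 ≤ n) {G : Finset (EdgeK m)}
    (hG : 2 ≤ #G) (e : EdgeK n) (X : Config n) :
    (glauberMatrix V Pt β n *ᵥ fun Y => (rootedDensity Y G e - rootedDensity X G e) ^ 2) X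
      ≤ 16 * #G ^ 2 / n ^ 3 := by
  have sq_le (f : EdgeK n) (c : Bool) :
      (rootedDensity (setEdge X f c) G e - rootedDensity X G e) ^ 2 ≤ influence G e f ^ 2 :=
    sq_le_sq.mpr ((abs_rootedDensity_setEdge_sub_le X G e f c).trans (le_abs_self _))
  rw [glauberMatrix_mulVec]
  calc _ ≤ (n.choose 2 : ℝ)⁻¹ * ∑ f, influence G e f ^ 2 := by
        gcongr with f _
        nlinarith [mul_le_mul_of_nonneg_left (sq_le f true) (Real.sigmoid_nonneg (dH V Pt β n X f)),
          mul_le_mul_of_nonneg_left (sq_le f false)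
            (sub_nonneg.mpr (Real.sigmoid_le_one (dH V Pt β n X f)))]
    _ ≤ ((n : ℝ) ^ 2 / 4)⁻¹ * (4 * (#G : ℝ) ^ 2 / n) := by
        gcongr
        exacts [sq_div_four_le_choose_two hn, sum_influence_sq_le hG e]
    _ = 16 * #G ^ 2 / n ^ 3 := by
        field_simp
        ring

theorem contractsOff_rootedDensity (hβ : IsFerromagnetic Pt β) (hV : ∀ i, V i ≤ L) (hn : 2 ≤ n)
    (hm : m ≤ L) {G : Finset (EdgeK m)} (hG : 2 ≤ #G) (e : EdgeK n) (R : ℝ) :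
    ContractsOff (glauberMatrix V Pt β n) {X | R < rbar L n X}
      (fun X => rootedDensity X G e - phiF Pt β R * R ^ (#G - 2))
      (contractionRate n #G) (16 * #G ^ 2 / n ^ 3) (4 * #G / n) where
  mulVec_le X hX := glauberMatrix_mulVec_rootedDensity_sub_le hβ hV hn hm
    (card_pos.mp (two_pos.trans_le hG)) e (by simpa using hX)
  mulVec_sq_le X _ := by
    simpa using glauberMatrix_mulVec_sq_rootedDensity_sub_le hn hG e X
  abs_sub_le X _ Y hY := by
    obtain ⟨f, c, rfl⟩ := exists_eq_setEdge_of_glauberMatrix_ne_zero hY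
    simpa using (abs_rootedDensity_setEdge_sub_le X G e f c).trans (influence_le hG e f)

theorem sum_killedMatrix_pow_rootedDensity_le (hβ : IsFerromagnetic Pt β) (hV : ∀ i, V i ≤ L)
    (hn : 2 ≤ n) (hL : L ≤ n) (hm : m ≤ L) {G : Finset (EdgeK m)} (hG : 2 ≤ #G) (e : EdgeK n)
    (R : ℝ) {κ : ℝ} (hκ : 0 ≤ κ) (hκL : 4 * L.choose 2 * κ ≤ 1) {t : ℕ} (ht : t ≤ n ^ 2)
    (X : Config n) (θ : ℝ) :
    ∑ Y with θ < rootedDensity Y G e,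
        (killedMatrix (glauberMatrix V Pt β n) {Y | R < rbar L n Y} ^ t) X Y
      ≤ Real.exp (κ * n * (contractionRate n #G ^ t
          * (rootedDensity X G e - phiF Pt β R * R ^ (#G - 2))
          - (θ - phiF Pt β R * R ^ (#G - 2)) + 16 * L.choose 2 ^ 2 * κ)) := by
  have hGL : #G ≤ L.choose 2 :=
    (card_pattern_le_choose_two G).trans (Nat.choose_le_choose 2 hm)
  have hGn : #G ≤ n.choose 2 := hGL.trans (Nat.choose_le_choose 2 hL)
  have htn : (t : ℝ) ≤ n ^ 2 := mod_cast ht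
  have step_le : κ * n * (4 * #G / n) ≤ 1 :=
    calc κ * n * (4 * #G / n) = 4 * #G * κ := by field_simp
      _ ≤ 4 * L.choose 2 * κ := by gcongr
      _ ≤ 1 := hκL
  have variance_le : 16 * #G ^ 2 / n ^ 3 * (κ * n) ^ 2 * t ≤ κ * n * (16 * L.choose 2 ^ 2 * κ) :=
    calc (16 * #G ^ 2 / n ^ 3 * (κ * n) ^ 2 * t : ℝ)
        ≤ 16 * L.choose 2 ^ 2 / n ^ 3 * (κ * n) ^ 2 * n ^ 2 := by gcongr
      _ = κ * n * (16 * L.choose 2 ^ 2 * κ) := by field_simp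
  have tail := (contractsOff_rootedDensity hβ hV hn hm hG e R).sum_killedMatrix_pow_le_exp
    (glauberMatrix_mem_rowStochastic V Pt β hn)
    (contractionRate_nonneg hGn) (contractionRate_le_one n #G) (by positivity)
    (by positivity : 0 ≤ κ * n) step_le t X (θ - phiF Pt β R * R ^ (#G - 2))
  simp only [sub_lt_sub_iff_right] at tail
  refine tail.trans (Real.exp_le_exp.mpr ?_)
  linarith

end Glauber

/-! ### Real analysis -/

section RealAnalysis

open Filter Topology

lemma lt_self_of_deriv_lt_one {f : ℝ → ℝ} {f' p q : ℝ} (hfix : f p = p) (hd : HasDerivAt f f' p)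
    (hf' : f' < 1) (hf : ContinuousOn f (Set.Ioo p q)) (hne : ∀ x ∈ Set.Ioo p q, f x ≠ x) :
    ∀ x ∈ Set.Ioo p q, f x < x := by
  intro x hx
  by_contra! hxf
  have slope_lt : ∀ᶠ y in 𝓝[>] p, slope f p y < 1 :=
    (hasDerivAt_iff_tendsto_slope_left_right.mp hd).2.eventually_lt_const hf'
  obtain ⟨y, hy, hpy, hyx⟩ := (slope_lt.and (Ioo_mem_nhdsGT hx.1)).exists
  rw [slope_def_field, hfix, div_lt_one (sub_pos.mpr hpy)] at hy
  have sub : Set.Icc y x ⊆ Set.Ioo p q := Set.Icc_subset_Ioo hpy hx.2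
  obtain ⟨z, hz, hfz⟩ := intermediate_value_Icc hyx.le ((hf.mono sub).sub continuousOn_id)
    ⟨(by simp; linarith : f y - y ≤ 0), (by simpa using hxf : 0 ≤ f x - x)⟩
  exact hne z (sub hz) (sub_eq_zero.mp hfz)

lemma exists_forall_Icc_le_sub_of_deriv_lt_one {f : ℝ → ℝ} {f' p q a b : ℝ} (hfix : f p = p)
    (hd : HasDerivAt f f' p) (hf' : f' < 1) (hf : ContinuousOn f (Set.Ioo p q))
    (hne : ∀ x ∈ Set.Ioo p q, f x ≠ x) (ha : p < a) (hb : b < q) :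
    ∃ γ > 0, ∀ x ∈ Set.Icc a b, f x ≤ x - γ := by
  have sub : Set.Icc a b ⊆ Set.Ioo p q := Set.Icc_subset_Ioo ha hb
  obtain ⟨γ, hγ, gap⟩ := isCompact_Icc.exists_forall_le' (continuousOn_id.sub (hf.mono sub))
    fun x hx => sub_pos.mpr (lt_self_of_deriv_lt_one hfix hd hf' hf hne x (sub hx))
  exact ⟨γ, hγ, fun x hx => le_sub_comm.mp (gap x hx)⟩

lemma eventually_mul_pow_mul_exp_le (C : ℝ) (k : ℕ) {α : ℝ} (hα : 0 < α) :
    ∀ᶠ n : ℕ in atTop, C * (n : ℝ) ^ k * Real.exp (-(2 * α * n)) ≤ Real.exp (-(α * n)) := by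
  have bound := (((isLittleO_pow_exp_pos_mul_atTop (k := k) hα).const_mul_left C).comp_tendsto
    tendsto_natCast_atTop_atTop).bound one_pos
  filter_upwards [bound] with n hn
  have pow_le : C * (n : ℝ) ^ k ≤ Real.exp (α * n) := by
    simpa using (le_abs_self _).trans hn
  calc C * (n : ℝ) ^ k * Real.exp (-(2 * α * n))
      ≤ Real.exp (α * n) * Real.exp (-(2 * α * n)) := by gcongr
    _ = Real.exp (-(α * n)) := by
        rw [← Real.exp_add]
        ring_nf

lemma pow_succ_sub_pow_succ_le {x y : ℝ} (hy : 0 ≤ y) (hyx : y ≤ x) (j : ℕ) :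
    x ^ (j + 1) - y ^ (j + 1) ≤ (j + 1) * (x - y) * x ^ j := by
  have h := (le_abs_self _).trans (abs_pow_sub_pow_le x y (j + 1))
  rw [abs_of_nonneg (sub_nonneg.mpr hyx), abs_of_nonneg hy, abs_of_nonneg (hy.trans hyx),
    max_eq_left hyx] at h
  calc _ ≤ _ := h
    _ = _ := by
      push_cast
      ring

end RealAnalysis

section Gap

variable {r ε P γ : ℝ} {j : ℕ}

lemma mul_pow_le_pow_succ_sub (hr : 0 ≤ r) (hε : 0 ≤ ε) (hP : P ≤ r + ε - γ) :
    P * (r + ε) ^ j ≤ (r + ε) ^ (j + 1) - γ * (r + ε) ^ j := by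
  have := mul_le_mul_of_nonneg_right hP (pow_nonneg (add_nonneg hr hε) j)
  linarith [pow_succ (r + ε) j]

lemma pow_succ_le_add_pow_succ_sub_mul (hr : 0 ≤ r) (hε : 0 ≤ ε) :
    r ^ (j + 1) ≤ (r + ε) ^ (j + 1) - ε * (r + ε) ^ j := by
  have : r ^ j * r ≤ (r + ε) ^ j * r := by gcongr; linarith
  linarith [pow_succ (r + ε) j, pow_succ r j]

lemma mul_pow_le_pow_succ (hr : 0 ≤ r) (hε : 0 ≤ ε) (hP : P ≤ r + ε - γ)
    (hγ : (j + 1) * ε ≤ γ) : P * (r + ε) ^ j ≤ r ^ (j + 1) := by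
  have := mul_le_mul_of_nonneg_right hγ (pow_nonneg (add_nonneg hr hε) j)
  linarith [mul_pow_le_pow_succ_sub (j := j) hr hε hP,
    pow_succ_sub_pow_succ_le hr (le_add_of_nonneg_right hε) j]

lemma mul_sub_add_le_add_pow_succ_sub (hr : 0 ≤ r) (hε : 0 ≤ ε) (hP : P ≤ r + ε - γ)
    (hγ : 4 * (j + 1) * ε ≤ γ) {w : ℝ} (hw : w ≤ 1) :
    w * (r ^ (j + 1) - P * (r + ε) ^ j) + ε / 2 * (r + ε) ^ j
      ≤ (r + ε) ^ (j + 1) - P * (r + ε) ^ j := by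
  have hjε : 0 ≤ (j + 1) * ε := by positivity
  have le_pow : P * (r + ε) ^ j ≤ r ^ (j + 1) := mul_pow_le_pow_succ hr hε hP (by linarith)
  have hR : 0 ≤ ε / 2 * (r + ε) ^ j := by positivity
  linarith [mul_le_mul_of_nonneg_right hw (sub_nonneg.mpr le_pow),
    pow_succ_le_add_pow_succ_sub_mul (j := j) hr hε]

lemma mul_sub_add_le_sub_pow_succ_sub (hε : 0 ≤ ε) (hεr : ε ≤ r) (hP : P ≤ r + ε - γ)
    (hγ : 4 * (j + 1) * ε ≤ γ) {w : ℝ} (hw : w ≤ 1 / 2) :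
    w * (r ^ (j + 1) - P * (r + ε) ^ j) + ε / 2 * (r + ε) ^ j
      ≤ (r - ε) ^ (j + 1) - P * (r + ε) ^ j := by
  have hr : 0 ≤ r := hε.trans hεr
  have hjε : 0 ≤ (j + 1) * ε := by positivity
  have le_pow : P * (r + ε) ^ j ≤ r ^ (j + 1) := mul_pow_le_pow_succ hr hε hP (by linarith)
  have pow_sub_ge := pow_succ_sub_pow_succ_le (sub_nonneg.mpr hεr) (by linarith : r - ε ≤ r + ε) j
  linarith [mul_le_mul_of_nonneg_right hw (sub_nonneg.mpr le_pow),
    mul_pow_le_pow_succ_sub (j := j) hr hε hP, pow_succ_le_add_pow_succ_sub_mul (j := j) hr hε,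
    mul_le_mul_of_nonneg_right hγ (pow_nonneg (add_nonneg hr hε) j)]

end Gap

/-! ### Union bound over rooted patterns -/

lemma sum_filter_le_sum_sum_filter {ι S : Type*} [Fintype ι] [Fintype S] {u : S → ℝ} (hu : 0 ≤ u)
    {p : ι → S → Prop} {q : S → Prop} [∀ i, DecidablePred (p i)] [DecidablePred q]
    (hq : ∀ y, q y → ∃ i, p i y) : ∑ y with q y, u y ≤ ∑ i, ∑ y with p i y, u y := by
  simp only [sum_filter]
  rw [sum_comm]
  refine sum_le_sum fun y _ => ?_
  have nonneg (i : ι) : 0 ≤ if p i y then u y else 0 := by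
    split_ifs
    exacts [hu y, le_rfl]
  split_ifs with hqy
  · obtain ⟨i, hi⟩ := hq y hqy
    simpa [hi] using single_le_sum (fun i _ => nonneg i) (mem_univ i)
  · exact sum_nonneg fun i _ => nonneg i

/-- The number of pattern graphs on at most `L` labelled vertices. -/
def patternCount (L : ℕ) : ℕ := ∑ m : Fin (L + 1), 2 ^ (m : ℕ).choose 2

theorem sum_lt_rbar_le {L n : ℕ} {R b : ℝ} (hR : 0 ≤ R) (hb : 0 ≤ b) {u : Config n → ℝ}
    (hu : 0 ≤ u) (h : ∀ m ≤ L, ∀ G : Finset (EdgeK m), 2 ≤ #G → ∀ e : EdgeK n,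
      ∑ Y with R ^ (#G - 1) < rootedDensity Y G e, u Y ≤ b) :
    ∑ Y with R < rbar L n Y, u Y ≤ patternCount L * n ^ 2 * b := by
  let p (i : Σ m : Fin (L + 1), Finset (EdgeK m) × EdgeK n) (Y : Config n) : Prop :=
    2 ≤ #i.2.1 ∧ R ^ (#i.2.1 - 1) < rootedDensity Y i.2.1 i.2.2
  have exists_of_lt (Y : Config n) (hY : R < rbar L n Y) : ∃ i, p i Y := by
    contrapose! hY
    exact (rbar_le_iff hR).mpr fun m hm G hG e =>
      not_lt.mp fun hlt => hY ⟨⟨m, Nat.lt_succ_of_le hm⟩, G, e⟩ ⟨hG, hlt⟩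
  have sum_le (i) : ∑ Y with p i Y, u Y ≤ b := by
    by_cases hG : 2 ≤ #i.2.1
    · simpa only [p, hG, true_and] using h i.1 (Nat.le_of_lt_succ i.1.2) i.2.1 hG i.2.2
    · simpa [p, hG] using hb
  calc ∑ Y with R < rbar L n Y, u Y ≤ ∑ i, ∑ Y with p i Y, u Y :=
        sum_filter_le_sum_sum_filter hu exists_of_lt
    _ ≤ (patternCount L * n.choose 2 : ℕ) * b := by
        refine (sum_le_card_nsmul _ _ b fun i _ => sum_le i).trans_eq ?_
        simp only [card_univ, Fintype.card_sigma, Fintype.card_prod, Fintype.card_finset,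
          card_edgeK, ← sum_mul, patternCount, nsmul_eq_mul]
    _ ≤ patternCount L * n ^ 2 * b := by
        gcongr
        exact mod_cast Nat.mul_le_mul_left _ (Nat.choose_le_pow n 2)

/-! ### Burn-in -/

section BurnIn

variable {s L n : ℕ} {V : Fin s → ℕ} {Pt : ∀ i, Finset (EdgeK (V i))} {β : Fin s → ℝ}

lemma sum_killedMatrix_pow_lt_rbar_le (hβ : IsFerromagnetic Pt β) (hV : ∀ i, V i ≤ L)
    (hn : 2 ≤ n) (hL : L ≤ n) {κ : ℝ} (hκ : 0 ≤ κ) (hκL : 4 * L.choose 2 * κ ≤ 1) {t : ℕ}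
    (ht : t ≤ n ^ 2) {X : Config n} {R θ η : ℝ} (hθ : 0 ≤ θ)
    (h : ∀ j, j + 2 ≤ L.choose 2 →
      contractionRate n (j + 2) ^ t * (rbar L n X ^ (j + 1) - phiF Pt β R * R ^ j) + η
        ≤ θ ^ (j + 1) - phiF Pt β R * R ^ j) :
    ∑ Y with θ < rbar L n Y,
        (killedMatrix (glauberMatrix V Pt β n) {Y | R < rbar L n Y} ^ t) X Y
      ≤ patternCount L * n ^ 2 * Real.exp (-(κ * n * (η - 16 * L.choose 2 ^ 2 * κ))) := by
  refine sum_lt_rbar_le hθ (Real.exp_nonneg _)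
    (killedMatrix_pow_nonneg (glauberMatrix_mem_rowStochastic V Pt β hn) t X)
    fun m hm G hG e => ?_
  refine (sum_killedMatrix_pow_rootedDensity_le hβ hV hn hL hm hG e R hκ hκL ht X _).trans
    (Real.exp_le_exp.mpr ?_)
  have hGL : #G ≤ L.choose 2 :=
    (card_pattern_le_choose_two G).trans (Nat.choose_le_choose 2 hm)
  have start := rootedDensity_le_pow (le_refl (rbar L n X)) hm G e
  obtain ⟨j, hj⟩ := Nat.exists_eq_add_of_le' hG
  have rate_nonneg := pow_nonneg
    (contractionRate_nonneg (hGL.trans (Nat.choose_le_choose 2 hL))) t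
  simp only [hj, Nat.add_sub_cancel, Nat.add_succ_sub_one] at hGL start rate_nonneg ⊢
  rw [← mul_neg]
  gcongr
  linarith [h j hGL, mul_le_mul_of_nonneg_left start rate_nonneg]

theorem one_sub_le_sum_kernelStep (hβ : IsFerromagnetic Pt β) (hV : ∀ i, V i ≤ L) (hn : 2 ≤ n)
    (hL : L ≤ n) {κ : ℝ} (hκ : 0 ≤ κ) (hκL : 4 * L.choose 2 * κ ≤ 1) {X : Config n}
    {μ ε γ : ℝ} (hμ : 0 ≤ μ) (hμX : μ ≤ rbar L n X) (hε : 0 ≤ ε) (hεX : ε ≤ rbar L n X)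
    (hX1 : rbar L n X + ε ≤ 1) (hγ : phiF Pt β (rbar L n X + ε) ≤ rbar L n X + ε - γ)
    (hεγ : 4 * L.choose 2 * ε ≤ γ) :
    1 - (n ^ 2 + 1) * (patternCount L * n ^ 2 *
        Real.exp (-(κ * n * (ε / 2 * μ ^ L.choose 2 - 16 * L.choose 2 ^ 2 * κ))))
      ≤ ∑ Y with rbar L n Y ≤ rbar L n X - ε, kernelStep (glauber V Pt β n) (n ^ 2) X Y := by
  set r := rbar L n X
  have hr : 0 ≤ r := hε.trans hεX
  have hjε {j : ℕ} (hj : j + 2 ≤ L.choose 2) : 4 * (j + 1) * ε ≤ γ := by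
    have : (j + 1 : ℝ) ≤ L.choose 2 := mod_cast (Nat.le_succ _).trans hj
    exact le_trans (by gcongr) hεγ
  have hη {j : ℕ} (hj : j + 2 ≤ L.choose 2) :
      ε / 2 * μ ^ L.choose 2 ≤ ε / 2 * (r + ε) ^ j := by
    gcongr
    calc μ ^ L.choose 2 ≤ μ ^ j := pow_le_pow_of_le_one hμ (by linarith) (by lia)
      _ ≤ (r + ε) ^ j := by gcongr; linarith
  have hjn {j : ℕ} (hj : j + 2 ≤ L.choose 2) : j + 2 ≤ n.choose 2 :=
    hj.trans (Nat.choose_le_choose 2 hL)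
  simp only [kernelStep_eq_pow]
  rw [← Nat.cast_pow n 2]
  refine one_sub_le_sum_pow (B := {Y | r + ε < rbar L n Y})
    (glauberMatrix_mem_rowStochastic V Pt β hn) (fun t ht => ?_) ?_
  · push_cast
    refine sum_killedMatrix_pow_lt_rbar_le hβ hV hn hL hκ hκL ht.le (by positivity) fun j hj => ?_
    have rate_le := pow_le_one₀ (n := t) (contractionRate_nonneg (hjn hj))
      (contractionRate_le_one n (j + 2))
    linarith [hη hj, mul_sub_add_le_add_pow_succ_sub hr hε hγ (hjε hj) rate_le]
  · simp only [compl_filter, not_le]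
    push_cast
    refine sum_killedMatrix_pow_lt_rbar_le hβ hV hn hL hκ hκL le_rfl (sub_nonneg.mpr hεX)
      fun j hj => ?_
    have rate_le := contractionRate_pow_sq_le_half hn (Nat.le_add_left 2 j) (hjn hj)
    linarith [hη hj, mul_sub_add_le_sub_pow_succ_sub hε hεX hγ (hjε hj) rate_le]

theorem exists_eventually_one_sub_exp_le_sum_kernelStep (hβ : IsFerromagnetic Pt β)
    (hV : ∀ i, V i ≤ L) {a b ε γ : ℝ} (ha : 0 < a) (hb : b ≤ 1) (hε : 0 < ε) (hεa : ε ≤ a)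
    (hγ : ∀ x ∈ Set.Icc a b, phiF Pt β x ≤ x - γ) (hεγ : 4 * L.choose 2 * ε ≤ γ) :
    ∃ α > 0, ∀ᶠ n : ℕ in Filter.atTop, ∀ X : Config n,
      a ≤ rbar L n X → rbar L n X + ε ≤ b → 1 - Real.exp (-(α * n))
        ≤ ∑ Y with rbar L n Y ≤ rbar L n X - ε, kernelStep (glauber V Pt β n) (n ^ 2) X Y := by
  set η := ε / 2 * a ^ L.choose 2
  have hη : 0 < η := by positivity
  obtain ⟨κ₁, hκ₁, step_le⟩ := exists_pos_mul_lt one_pos (4 * L.choose 2 : ℝ)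
  obtain ⟨κ₂, hκ₂, variance_le⟩ := exists_pos_mul_lt (half_pos hη) (16 * L.choose 2 ^ 2 : ℝ)
  set κ := min κ₁ κ₂
  have hκ : 0 < κ := lt_min hκ₁ hκ₂
  have hκ_step : 4 * L.choose 2 * κ ≤ 1 :=
    le_trans (by gcongr; exact min_le_left _ _) step_le.le
  have hκ_variance : 16 * L.choose 2 ^ 2 * κ ≤ η / 2 :=
    le_trans (by gcongr; exact min_le_right _ _) variance_le.le
  refine ⟨κ * η / 4, by positivity, ?_⟩
  filter_upwards [eventually_mul_pow_mul_exp_le (2 * patternCount L) 4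
    (by positivity : 0 < κ * η / 4), Filter.eventually_ge_atTop 2,
    Filter.eventually_ge_atTop L] with n small hn hLn X haX hXb
  refine le_trans (sub_le_sub_left (le_trans ?_ small) 1)
    (one_sub_le_sum_kernelStep hβ hV hn hLn hκ.le hκ_step ha.le haX hε.le (hεa.trans haX)
      (hXb.trans hb) (hγ _ ⟨by linarith, hXb⟩) hεγ)
  have hn1 : 1 ≤ (n : ℝ) ^ 2 := mod_cast Nat.one_le_pow 2 n (by lia)
  calc _ ≤ (n ^ 2 + n ^ 2) * (patternCount L * n ^ 2 * Real.exp (-(κ * n * (η - η / 2)))) := by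
        gcongr
    _ = 2 * patternCount L * n ^ 4 * Real.exp (-(2 * (κ * η / 4) * n)) := by ring_nf

end BurnIn

/-- **Burn-in to the fixed point (Lemma 8).** Let `p*` solve `φ(p)=p` with `φ'(p*)<1` and
let `p̄` be the least solution of `φ(p)=p` greater than `p*` if one exists, and `1`
otherwise. For every `μ > 0` there are `δ, c, α > 0` such that for large `n` and any start
`X(0)` with `p*+μ ≤ r̄(X(0)) ≤ p̄-μ`, after `T = ⌈cn²⌉` Glauber steps,
`r̄(X(T)) ≤ r̄(X(0)) - δ` with probability at least `1 - e^(-αn)`. -/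
theorem burn_in_random_walk
    {L s : ℕ} (hL : 2 ≤ L) (hs : 0 < s)
    (V : Fin s → ℕ) (Pt : ∀ i, Finset (EdgeK (V i))) (β : Fin s → ℝ)
    (hV2 : ∀ i, 2 ≤ V i) (hVL : ∀ i, V i ≤ L)
    (hG1V : V ⟨0, hs⟩ = 2) (hG1E : (Pt ⟨0, hs⟩).card = 1)
    (hβ : ∀ i : Fin s, 0 < (i : ℕ) → 0 < β i)
    (pstar pbar : ℝ) (hmem : pstar ∈ Set.Icc (0:ℝ) 1)
    (hfix : phiF Pt β pstar = pstar) (hderiv : deriv (phiF Pt β) pstar < 1)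
    (hpbar : (pstar < pbar ∧ pbar ≤ 1 ∧ phiF Pt β pbar = pbar ∧
          ∀ q ∈ Set.Ioo pstar pbar, phiF Pt β q ≠ q) ∨
        (pbar = 1 ∧ ∀ q ∈ Set.Ioc pstar (1:ℝ), phiF Pt β q ≠ q)) :
    ∀ μ : ℝ, 0 < μ → ∃ δ c α : ℝ, 0 < δ ∧ 0 < c ∧ 0 < α ∧ ∃ N : ℕ, ∀ n ≥ N,
      ∀ X0 : Config n, pstar + μ ≤ rbar L n X0 → rbar L n X0 ≤ pbar - μ →
        1 - Real.exp (-(α * n)) ≤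
          ∑ Y ∈ univ.filter (fun Y : Config n => rbar L n Y ≤ rbar L n X0 - δ),
            kernelStep (glauber V Pt β n) ⌈c * (n : ℝ) ^ 2⌉₊ X0 Y := by
  intro μ hμ
  have hpbar1 : pbar ≤ 1 := hpbar.elim (fun h => h.2.1) fun h => h.1.le
  have hne : ∀ q ∈ Set.Ioo pstar pbar, phiF Pt β q ≠ q :=
    hpbar.elim (fun h => h.2.2.2) fun h q hq => h.2 q ⟨hq.1, hq.2.le.trans hpbar1⟩
  have hphi := differentiable_phiF Pt β
  obtain ⟨γ, hγ, gap⟩ := exists_forall_Icc_le_sub_of_deriv_lt_one hfix (hphi pstar).hasDerivAt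
    hderiv hphi.continuous.continuousOn hne (lt_add_of_pos_right pstar hμ)
    (sub_lt_self pbar (half_pos hμ))
  obtain ⟨ε, hε, hεγ⟩ := exists_pos_mul_lt hγ (4 * L.choose 2 : ℝ)
  set δ := min ε (μ / 2)
  have hδ : 0 < δ := lt_min hε (half_pos hμ)
  have hδμ : δ ≤ μ / 2 := min_le_right _ _
  have hδγ : 4 * L.choose 2 * δ ≤ γ := le_trans (by gcongr; exact min_le_left _ _) hεγ.le
  obtain ⟨α, hα, burn_in⟩ := exists_eventually_one_sub_exp_le_sum_kernelStep
    (isFerromagnetic_of_pos hs hG1V hG1E hβ) hVL (by linarith [hmem.1]) (by linarith) hδ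
    (by linarith [hmem.1]) gap hδγ
  obtain ⟨N, hN⟩ := Filter.eventually_atTop.mp burn_in
  refine ⟨δ, 1, α, hδ, one_pos, hα, N, fun n hn X0 hlo hhi => ?_⟩
  rw [one_mul, ← Nat.cast_pow, Nat.ceil_natCast]
  exact hN n hn X0 hlo (by linarith)
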